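/- For every λ ∈ κ and every n ≥ 1, the kernel of the Ā-module homomorphism πₙ^λ: Āⁿ → M(λ)ₙ sending the standard basis vector eᵢ to uᵢ (the projective cover of M(λ)ₙ) is isomorphic as an Ā-module to M(−λ)ₙ. In particular the first syzygy of M(λ)ₙ over Ā is M(−λ)ₙ. -/

import Mathlib

open LinearMap TensorProduct

noncomputable section

namespace HellerKronecker

variable (R : Type) [CommRing R]

/-! ### Coordinate functionals on `Fin n → Fin 4 → R` (the underlying module of `Aⁿ`,
`Zₙ^λ` and `Zₙ^∞`, in their standard `𝒪`-bases). -/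

/-- The `(i,j)`-coordinate functional. -/
def ent (n : ℕ) (i : Fin n) (j : Fin 4) : (Fin n → Fin 4 → R) →ₗ[R] R :=
  (LinearMap.proj j : (Fin 4 → R) →ₗ[R] R).comp
    (LinearMap.proj i : (Fin n → Fin 4 → R) →ₗ[R] (Fin 4 → R))

/-- The `(i+1,j)`-coordinate functional (zero at the boundary). -/
def entSucc (n : ℕ) (i : Fin n) (j : Fin 4) : (Fin n → Fin 4 → R) →ₗ[R] R :=
  if h : i.val + 1 < n then ent R n ⟨i.val + 1, h⟩ j else 0

/-- The `(i-1,j)`-coordinate functional (zero at the boundary). -/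
def entPred (n : ℕ) (i : Fin n) (j : Fin 4) : (Fin n → Fin 4 → R) →ₗ[R] R :=
  if 0 < i.val then ent R n ⟨i.val - 1, lt_of_le_of_lt (Nat.sub_le _ _) i.isLt⟩ j else 0

/-- The standard basis vector with a `1` in position `(i,j)`. -/
def bas (n : ℕ) (i : Fin n) (j : Fin 4) : Fin n → Fin 4 → R :=
  Pi.single i (Pi.single j 1)

/-- The action of `X` on `Aⁿ = (𝒪[X,Y]/(X²,Y²))ⁿ` in the basis `eᵢ, Xeᵢ, Yeᵢ, XYeᵢ`.
This is also the action of `X` on the Heller lattice `Zₙ^λ` in the basis `a_{i,j}`. -/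
def opAX (n : ℕ) : (Fin n → Fin 4 → R) →ₗ[R] (Fin n → Fin 4 → R) :=
  LinearMap.pi fun i => LinearMap.pi fun j => ![0, ent R n i 0, 0, ent R n i 2] j

/-- The action of `Y` on `Aⁿ` in the basis `eᵢ, Xeᵢ, Yeᵢ, XYeᵢ`. -/
def opAY (n : ℕ) : (Fin n → Fin 4 → R) →ₗ[R] (Fin n → Fin 4 → R) :=
  LinearMap.pi fun i => LinearMap.pi fun j => ![0, 0, ent R n i 0, ent R n i 1] j

/-- The action of `X` on the Heller lattice `Zₙ^λ` in the `𝒪`-basis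
`a_{i,1} = εeᵢ, a_{i,2} = εXeᵢ, a_{i,3} = Yeᵢ − λXeᵢ − Xe_{i−1}, a_{i,4} = XYeᵢ`. -/
def opZlX (n : ℕ) : (Fin n → Fin 4 → R) →ₗ[R] (Fin n → Fin 4 → R) := opAX R n

/-- The action of `Y` on the Heller lattice `Zₙ^λ` (uniformizer `e`, parameter `l`). -/
def opZlY (n : ℕ) (e l : R) : (Fin n → Fin 4 → R) →ₗ[R] (Fin n → Fin 4 → R) :=
  LinearMap.pi fun i => LinearMap.pi fun j =>
    ![0, l • ent R n i 0 + entSucc R n i 0, e • ent R n i 0,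
      e • ent R n i 1 - l • ent R n i 2 - entSucc R n i 2] j

/-- The action of `X` on the Heller lattice `Zₙ^∞` in the `𝒪`-basis `b_{i,j}`. -/
def opZiX (n : ℕ) (e : R) : (Fin n → Fin 4 → R) →ₗ[R] (Fin n → Fin 4 → R) :=
  LinearMap.pi fun i => LinearMap.pi fun j =>
    ![0, (if i.val = 0 then e else 1) • ent R n i 0, 0,
      (if i.val + 1 = n then e else 1) • ent R n i 2] j

/-- The action of `Y` on the Heller lattice `Zₙ^∞` in the `𝒪`-basis `b_{i,j}`. -/
def opZiY (n : ℕ) (e : R) : (Fin n → Fin 4 → R) →ₗ[R] (Fin n → Fin 4 → R) :=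
  LinearMap.pi fun i => LinearMap.pi fun j =>
    ![0, entPred R n i 0, (if i.val + 1 = n then (1 : R) else e) • ent R n i 0,
      (if i.val = 0 then (1 : R) else e) • ent R n i 1 - entPred R n i 2] j

/-! ### The modules `M(λ)ₙ` and `M(∞)ₙ`, with underlying space `Fin n → Fin 2 → R`
(coordinate `(i,0)` is `u_{i+1}`, coordinate `(i,1)` is `v_{i+1}`). -/

def entm (n : ℕ) (i : Fin n) (j : Fin 2) : (Fin n → Fin 2 → R) →ₗ[R] R :=
  (LinearMap.proj j : (Fin 2 → R) →ₗ[R] R).comp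
    (LinearMap.proj i : (Fin n → Fin 2 → R) →ₗ[R] (Fin 2 → R))

def entmSucc (n : ℕ) (i : Fin n) (j : Fin 2) : (Fin n → Fin 2 → R) →ₗ[R] R :=
  if h : i.val + 1 < n then entm R n ⟨i.val + 1, h⟩ j else 0

/-- The standard basis vector of `M(λ)ₙ`/`M(∞)ₙ`: `(i,0) ↦ uᵢ`, `(i,1) ↦ vᵢ`. -/
def basm (n : ℕ) (i : Fin n) (j : Fin 2) : Fin n → Fin 2 → R :=
  Pi.single i (Pi.single j 1)

/-- `X` on `M(λ)ₙ` : `X·uᵢ = vᵢ`, `X·vᵢ = 0`. -/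
def opMlX (n : ℕ) : (Fin n → Fin 2 → R) →ₗ[R] (Fin n → Fin 2 → R) :=
  LinearMap.pi fun i => LinearMap.pi fun j => ![0, entm R n i 0] j

/-- `Y` on `M(λ)ₙ` : `Y·uᵢ = λvᵢ + v_{i−1}`, `Y·vᵢ = 0`. -/
def opMlY (n : ℕ) (l : R) : (Fin n → Fin 2 → R) →ₗ[R] (Fin n → Fin 2 → R) :=
  LinearMap.pi fun i => LinearMap.pi fun j => ![0, l • entm R n i 0 + entmSucc R n i 0] j

/-- `X` on `M(∞)ₙ` : `X·uᵢ = v_{i−1}`, `X·vᵢ = 0`. -/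
def opMiX (n : ℕ) : (Fin n → Fin 2 → R) →ₗ[R] (Fin n → Fin 2 → R) :=
  LinearMap.pi fun i => LinearMap.pi fun j => ![0, entmSucc R n i 0] j

/-- `Y` on `M(∞)ₙ` : `Y·uᵢ = vᵢ`, `Y·vᵢ = 0`. -/
def opMiY (n : ℕ) : (Fin n → Fin 2 → R) →ₗ[R] (Fin n → Fin 2 → R) :=
  LinearMap.pi fun i => LinearMap.pi fun j => ![0, entm R n i 0] j

/-! ### Projective covers. -/

/-- The projective cover `πₙ^λ : Aⁿ → M(λ)ₙ`, `eᵢ ↦ uᵢ` (extended `A`-linearly,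
an element of `Aⁿ` being recorded by its coordinates in the basis `eᵢ, Xeᵢ, Yeᵢ, XYeᵢ`). -/
def projCovMl (n : ℕ) (l : R) : (Fin n → Fin 4 → R) →ₗ[R] (Fin n → Fin 2 → R) :=
  ∑ k : Fin n, ∑ j : Fin 4,
    (ent R n k j).smulRight
      ((![LinearMap.id, opMlX R n, opMlY R n l, (opMlX R n) ∘ₗ (opMlY R n l)] j) (basm R n k 0))

/-- The projective cover `πₙ^∞ : Aⁿ → M(∞)ₙ`, `eᵢ ↦ uᵢ`. -/
def projCovMi (n : ℕ) : (Fin n → Fin 4 → R) →ₗ[R] (Fin n → Fin 2 → R) :=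
  ∑ k : Fin n, ∑ j : Fin 4,
    (ent R n k j).smulRight
      ((![LinearMap.id, opMiX R n, opMiY R n, (opMiX R n) ∘ₗ (opMiY R n)] j) (basm R n k 0))

/-- The projective cover `π_{n,λ} : A^{2n} → Zₙ^λ`, `e_{2k−1} ↦ a_{k,1}`, `e_{2k} ↦ a_{k,3}`. -/
def projCovZl (n : ℕ) (e l : R) : (Fin (2*n) → Fin 4 → R) →ₗ[R] (Fin n → Fin 4 → R) :=
  ∑ k : Fin n, ∑ j : Fin 4,
    ((ent R (2*n) ⟨2*k.val, by have := k.isLt; omega⟩ j).smulRight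
        ((![LinearMap.id, opZlX R n, opZlY R n e l, (opZlX R n) ∘ₗ (opZlY R n e l)] j)
          (bas R n k 0))
     + (ent R (2*n) ⟨2*k.val + 1, by have := k.isLt; omega⟩ j).smulRight
        ((![LinearMap.id, opZlX R n, opZlY R n e l, (opZlX R n) ∘ₗ (opZlY R n e l)] j)
          (bas R n k 2)))

/-- Images of the standard basis vectors of `A^{2n}` under `π_{n,∞}`:
`e₁ ↦ b_{1,1}`, `e₂ ↦ b_{1,2}`, `e_{2k+1} ↦ b_{k,3}` (`1 ≤ k ≤ n−1`),
`e_{2k} ↦ b_{k,1}` (`2 ≤ k ≤ n`)  (here `s` is the 0-based index of the basis vector). -/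
def tgtZi (n : ℕ) (s : Fin (2*n)) : Fin n → Fin 4 → R :=
  if s.val = 0 then bas R n ⟨0, by have := s.isLt; omega⟩ 0
  else if s.val = 1 then bas R n ⟨0, by have := s.isLt; omega⟩ 1
  else if s.val % 2 = 0 then bas R n ⟨s.val / 2 - 1, by have := s.isLt; omega⟩ 2
  else bas R n ⟨s.val / 2, by have := s.isLt; omega⟩ 0

/-- The projective cover `π_{n,∞} : A^{2n} → Zₙ^∞`. -/
def projCovZi (n : ℕ) (e : R) : (Fin (2*n) → Fin 4 → R) →ₗ[R] (Fin n → Fin 4 → R) :=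
  ∑ s : Fin (2*n), ∑ j : Fin 4,
    (ent R (2*n) s j).smulRight
      ((![LinearMap.id, opZiX R n e, opZiY R n e, (opZiX R n e) ∘ₗ (opZiY R n e)] j)
        (tgtZi R n s))

/-- The endomorphism `Φₙ` of `Zₙ^λ` (resp. `Zₙ^∞`): the unique `A`-endomorphism sending
`a_{n,1} ↦ a_{n,4}` (resp. `b_{n,1} ↦ b_{n,4}`) and `a_{k,1} ↦ 0` for `k < n`. -/
def PhiEnd (n : ℕ) : (Fin n → Fin 4 → R) →ₗ[R] (Fin n → Fin 4 → R) :=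
  LinearMap.pi fun i => LinearMap.pi fun j =>
    if i.val + 1 = n ∧ j = 3 then ent R n i 0 else 0

/-- The pull-back lattice `Eₙ^λ = {(x,y) ∈ A^{2n} ⊕ Zₙ^λ ∣ π_{n,λ}(x) = Φₙ^λ(y)}`. -/
def El (n : ℕ) (e l : R) :
    Submodule R ((Fin (2*n) → Fin 4 → R) × (Fin n → Fin 4 → R)) :=
  LinearMap.ker ((projCovZl R n e l) ∘ₗ (LinearMap.fst R _ _)
    - (PhiEnd R n) ∘ₗ (LinearMap.snd R _ _))

/-- The pull-back lattice `Eₙ^∞ = {(x,y) ∈ A^{2n} ⊕ Zₙ^∞ ∣ π_{n,∞}(x) = Φₙ^∞(y)}`. -/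
def Ei (n : ℕ) (e : R) :
    Submodule R ((Fin (2*n) → Fin 4 → R) × (Fin n → Fin 4 → R)) :=
  LinearMap.ker ((projCovZi R n e) ∘ₗ (LinearMap.fst R _ _)
    - (PhiEnd R n) ∘ₗ (LinearMap.snd R _ _))

end HellerKronecker


/-!
Collect the coordinates of a vector by their second index, so that `M(λ)ₙ` consists of pairs
`(u, v)` and `Āⁿ` of quadruples `(a, b, c, d)` of vectors in `Rⁿ`. With `J` the Jordan block of
eigenvalue `λ`, the actions on `M(λ)ₙ` are `X (u, v) = (0, u)` and `Y (u, v) = (0, J u)`, and the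
cover is `(a, b, c, d) ↦ (a, b + J c)`. Its kernel `{(0, -J c, c, d)}` is parametrised by `(c, d)`,
with `X (c, d) = (0, c)` and `Y (c, d) = (0, -J c)`. Finally `-J` is conjugate, through the
diagonal matrix of alternating signs, to the Jordan block of eigenvalue `-λ`.
-/

namespace HellerKronecker

section JordanBlock

variable {R : Type*} [CommRing R] {n : ℕ}

/-- The nilpotent shift `(c₀, …, cₙ₋₁) ↦ (c₁, …, cₙ₋₁, 0)` of `Rⁿ`. -/
def shift : (Fin n → R) →ₗ[R] (Fin n → R) :=
  LinearMap.pi fun i => if h : i.val + 1 < n then LinearMap.proj ⟨i.val + 1, h⟩ else 0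

/-- The Jordan block of size `n` with eigenvalue `l`, as an endomorphism of `Rⁿ`. -/
def jordanBlock (l : R) : (Fin n → R) →ₗ[R] (Fin n → R) :=
  l • LinearMap.id + shift

/-- The diagonal endomorphism of `Rⁿ` with entries `1, -1, 1, …`, which conjugates `shift` to
`-shift`. -/
def altSign : (Fin n → R) →ₗ[R] (Fin n → R) :=
  LinearMap.pi fun i => (-1 : R) ^ i.val • LinearMap.proj i

theorem shift_apply (c : Fin n → R) (i : Fin n) :
    shift c i = if h : i.val + 1 < n then c ⟨i.val + 1, h⟩ else 0 := by
  by_cases h : i.val + 1 < n <;> simp [shift, h]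

theorem jordanBlock_apply (l : R) (c : Fin n → R) : jordanBlock l c = l • c + shift c :=
  rfl

theorem altSign_apply (c : Fin n → R) (i : Fin n) : altSign c i = (-1) ^ i.val * c i :=
  rfl

theorem altSign_involutive : Function.Involutive (altSign : (Fin n → R) → (Fin n → R)) := by
  intro c
  ext i
  simp [altSign_apply, ← mul_assoc, ← mul_pow]

theorem shift_altSign (c : Fin n → R) : shift (altSign c) = -altSign (shift c) := by
  ext i
  by_cases h : i.val + 1 < n <;> simp [shift_apply, altSign_apply, h, pow_succ]

theorem jordanBlock_altSign (l : R) (c : Fin n → R) :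
    jordanBlock l (altSign c) = -altSign (jordanBlock (-l) c) := by
  simp only [jordanBlock_apply, shift_altSign, map_add, map_smul]
  module

end JordanBlock

section Columns

variable {R : Type*} [Semiring R] {n k : ℕ}

/-- The identification of `(Rⁿ)ᵏ` with `(Rᵏ)ⁿ` by transposition. It allows elements of `M(λ)ₙ` to be
written as `ofCols ![u, v]`, and elements of `Āⁿ` as `ofCols ![a, b, c, d]`. -/
def ofCols : (Fin k → Fin n → R) ≃ₗ[R] (Fin n → Fin k → R) where
  toEquiv := Equiv.piComm _
  map_add' _ _ := rfl
  map_smul' _ _ := rfl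

theorem ofCols_apply (c : Fin k → Fin n → R) (i : Fin n) (j : Fin k) : ofCols c i j = c j i :=
  rfl

end Columns

variable {R : Type} [CommRing R] {n : ℕ}

theorem sum_smul_basm_zero (u : Fin n → R) :
    ∑ k, u k • basm R n k 0 = ofCols ![u, 0] := by
  ext i j
  fin_cases j <;> simp [basm, ofCols_apply, Pi.single_apply, ite_apply]

theorem opMlX_ofCols (c : Fin 2 → Fin n → R) : opMlX R n (ofCols c) = ofCols ![0, c 0] := by
  ext i j
  fin_cases j <;> simp [opMlX, entm, ofCols_apply]

theorem opMlY_ofCols (l : R) (c : Fin 2 → Fin n → R) :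
    opMlY R n l (ofCols c) = ofCols ![0, jordanBlock l (c 0)] := by
  ext i j
  fin_cases j
  · simp [opMlY, ofCols_apply]
  · by_cases h : i.val + 1 < n <;>
      simp [opMlY, entm, entmSucc, ofCols_apply, jordanBlock_apply, shift_apply, h]

theorem opAX_ofCols (c : Fin 4 → Fin n → R) :
    opAX R n (ofCols c) = ofCols ![0, c 0, 0, c 2] := by
  ext i j
  fin_cases j <;> simp [opAX, ent, ofCols_apply]

theorem opAY_ofCols (c : Fin 4 → Fin n → R) :
    opAY R n (ofCols c) = ofCols ![0, 0, c 0, c 1] := by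
  ext i j
  fin_cases j <;> simp [opAY, ent, ofCols_apply]

theorem projCovMl_ofCols (l : R) (c : Fin 4 → Fin n → R) :
    projCovMl R n l (ofCols c) = ofCols ![c 0, c 1 + jordanBlock l (c 2)] := by
  have expand : projCovMl R n l (ofCols c) =
      ofCols ![c 0, 0] + opMlX R n (ofCols ![c 1, 0]) + opMlY R n l (ofCols ![c 2, 0])
        + opMlX R n (opMlY R n l (ofCols ![c 3, 0])) := by
    simp only [← sum_smul_basm_zero, map_sum, map_smul, ← Finset.sum_add_distrib]
    simp [projCovMl, Fin.sum_univ_four, ent, ofCols_apply]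
  rw [expand]
  simp only [opMlX_ofCols, opMlY_ofCols, ← map_add]
  simp

theorem projCovMl_surjective (l : R) : Function.Surjective (projCovMl R n l) := by
  intro m
  obtain ⟨c, rfl⟩ := ofCols.surjective m
  refine ⟨ofCols ![c 0, c 1, 0, 0], ?_⟩
  rw [projCovMl_ofCols]
  congr 1
  ext j
  fin_cases j <;> simp

theorem ofCols_mem_ker_projCovMl_iff (l : R) (c : Fin 4 → Fin n → R) :
    ofCols c ∈ LinearMap.ker (projCovMl R n l) ↔ c 0 = 0 ∧ c 1 = -jordanBlock l (c 2) := by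
  rw [LinearMap.mem_ker, projCovMl_ofCols, LinearEquiv.map_eq_zero_iff]
  simp [eq_neg_iff_add_eq_zero]

/-- The embedding `M(-λ)ₙ → Āⁿ` onto the first syzygy of `M(λ)ₙ`: the parametrisation
`(c, d) ↦ (0, -J c, c, d)` of the kernel of the cover, precomposed with `altSign` in both
components. -/
def syzygyEmb (l : R) : (Fin n → Fin 2 → R) →ₗ[R] (Fin n → Fin 4 → R) :=
  ofCols.toLinearMap ∘ₗ
    LinearMap.pi ![0, -(jordanBlock l ∘ₗ altSign ∘ₗ LinearMap.proj 0),
      altSign ∘ₗ LinearMap.proj 0, altSign ∘ₗ LinearMap.proj 1] ∘ₗ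
    ofCols.symm.toLinearMap

theorem syzygyEmb_ofCols (l : R) (c : Fin 2 → Fin n → R) :
    syzygyEmb l (ofCols c) =
      ofCols ![0, -jordanBlock l (altSign (c 0)), altSign (c 0), altSign (c 1)] := by
  ext i j
  fin_cases j <;> simp [syzygyEmb, ofCols_apply]

theorem syzygyEmb_injective (l : R) :
    Function.Injective (syzygyEmb l : (Fin n → Fin 2 → R) → (Fin n → Fin 4 → R)) := by
  intro m m' h
  obtain ⟨c, rfl⟩ := ofCols.surjective m
  obtain ⟨c', rfl⟩ := ofCols.surjective m'
  rw [syzygyEmb_ofCols, syzygyEmb_ofCols, ofCols.injective.eq_iff] at h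
  have h_u : c 0 = c' 0 := altSign_involutive.injective (congrFun h 2)
  have h_v : c 1 = c' 1 := altSign_involutive.injective (congrFun h 3)
  congr 1
  ext j
  fin_cases j <;> simp [h_u, h_v]

theorem syzygyEmb_comp_opMlX (l : R) :
    syzygyEmb l ∘ₗ opMlX R n = opAX R n ∘ₗ syzygyEmb l := by
  refine LinearMap.ext fun m => ?_
  obtain ⟨c, rfl⟩ := ofCols.surjective m
  simp [opMlX_ofCols, opAX_ofCols, syzygyEmb_ofCols]

theorem syzygyEmb_comp_opMlY (l : R) :
    syzygyEmb l ∘ₗ opMlY R n (-l) = opAY R n ∘ₗ syzygyEmb l := by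
  refine LinearMap.ext fun m => ?_
  obtain ⟨c, rfl⟩ := ofCols.surjective m
  simp [opMlY_ofCols, opAY_ofCols, syzygyEmb_ofCols, jordanBlock_altSign]

theorem range_syzygyEmb (l : R) :
    LinearMap.range (syzygyEmb l) = LinearMap.ker (projCovMl R n l) := by
  refine le_antisymm ?_ fun x hx => ?_
  · rintro _ ⟨m, rfl⟩
    obtain ⟨c, rfl⟩ := ofCols.surjective m
    rw [syzygyEmb_ofCols, ofCols_mem_ker_projCovMl_iff]
    exact ⟨rfl, rfl⟩
  · obtain ⟨c, rfl⟩ := ofCols.surjective x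
    obtain ⟨h_zero, h_one⟩ := (ofCols_mem_ker_projCovMl_iff l c).1 hx
    refine ⟨ofCols ![altSign (c 2), altSign (c 3)], ?_⟩
    rw [syzygyEmb_ofCols]
    congr 1
    ext j
    fin_cases j <;> simp [h_zero, h_one, altSign_involutive _]

theorem statement4_general (R : Type) [CommRing R] (l : R) (n : ℕ) :
    Function.Surjective (projCovMl R n l) ∧
    ∃ ι : (Fin n → Fin 2 → R) →ₗ[R] (Fin n → Fin 4 → R),
      Function.Injective ι ∧
      ι ∘ₗ opMlX R n = opAX R n ∘ₗ ι ∧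
      ι ∘ₗ opMlY R n (-l) = opAY R n ∘ₗ ι ∧
      LinearMap.range ι = LinearMap.ker (projCovMl R n l) :=
  ⟨projCovMl_surjective l, syzygyEmb l, syzygyEmb_injective l, syzygyEmb_comp_opMlX l,
    syzygyEmb_comp_opMlY l, range_syzygyEmb l⟩

end HellerKronecker

open HellerKronecker in
/-- Over `Ā = κ[X,Y]/(X²,Y²)`, the kernel of the projective cover
`πₙ^λ : Āⁿ → M(λ)ₙ`, `eᵢ ↦ uᵢ`, is isomorphic to `M(−λ)ₙ` as an `Ā`-module:
there is an injective `Ā`-homomorphism `M(−λ)ₙ → Āⁿ` with image `ker πₙ^λ`. -/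
theorem statement4 (κ : Type) [Field κ] [IsAlgClosed κ] (l : κ) (n : ℕ) (hn : 1 ≤ n) :
    Function.Surjective (projCovMl κ n l) ∧
    ∃ ι : (Fin n → Fin 2 → κ) →ₗ[κ] (Fin n → Fin 4 → κ),
      Function.Injective ι ∧
      ι ∘ₗ opMlX κ n = opAX κ n ∘ₗ ι ∧
      ι ∘ₗ opMlY κ n (-l) = opAY κ n ∘ₗ ι ∧
      LinearMap.range ι = LinearMap.ker (projCovMl κ n l) := by
  exact statement4_general κ l n
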